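/- arXiv:1604.04637 — 4 statements merged into one kernel-verified Lean document; each statement's English description precedes it below -/
import Mathlib

section
/- Suppose both norms ‖·‖ and |||·||| equal the Euclidean norm ‖·‖₂. If L ∈ Gr(V,m) satisfies L ∩ int(K) ≠ ∅, then ν(L) = sin ∠(L^⊥, K*). -/
/-!
Write `α = ∠(y, u)` with `‖u‖ = 1`. Then `‖y - u‖² = (‖y‖ - cos α)² + sin² α`, so for a fixed
direction of `y` the distance from `u` to the line spanned by `y` is `sin α`, attained at a multiple
of `y`, which again lies in `Lᗮ`. Hence every angle `θ` occurring in `coneAngle` satisfies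
`ν(L) ≤ sin θ`, and this passes to the infimum by continuity of `sin`. Conversely, if
`α ≤ π / 2` then `coneAngle ≤ α` gives `sin (coneAngle) ≤ sin α ≤ ‖y - u‖`, since `sin` is monotone
on `[0, π / 2]`; if `α ≥ π / 2` (or `y = 0`) already `‖y - u‖ ≥ 1`.
Both infima range over nonempty sets because `Lᗮ ≠ 0` by dimension, and the dual cone is nonzero
by separating a point outside `K` from `K`.
-/

open Module RealInnerProductSpace

/-- `N` is a norm on the real vector space `V`. -/
structure IsNorm (V : Type*) [AddCommGroup V] [Module ℝ V] (N : V → ℝ) : Prop where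
  nonneg : ∀ x, 0 ≤ N x
  eq_zero_iff : ∀ x, N x = 0 ↔ x = 0
  smul_eq : ∀ (c : ℝ) (x : V), N (c • x) = |c| * N x
  add_le : ∀ x y, N (x + y) ≤ N x + N y

/-- `K` is a regular closed convex cone: closed, convex, a cone, pointed and solid. -/
structure IsRegularCone (V : Type*) [NormedAddCommGroup V] [InnerProductSpace ℝ V]
    (K : Set V) : Prop where
  closed : IsClosed K
  convex : Convex ℝ K
  smul_mem : ∀ ⦃c : ℝ⦄, 0 < c → ∀ ⦃x⦄, x ∈ K → c • x ∈ K
  pointed : K ∩ (-K) = {0}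
  solid : (interior K).Nonempty

variable {V : Type*} [NormedAddCommGroup V] [InnerProductSpace ℝ V]

/-- The dual norm of `N` with respect to the inner product of `V`. -/
noncomputable def dualNorm (N : V → ℝ) (u : V) : ℝ :=
  sSup {r : ℝ | ∃ x : V, N x = 1 ∧ r = ⟪u, x⟫}

/-- The dual cone of `K`. -/
def dualCone (K : Set V) : Set V := {u : V | ∀ x ∈ K, 0 ≤ ⟪u, x⟫}

/-- `dist(L1,L2) = max_{x ∈ L1, x ≠ 0} min_{v ∈ L2} |||x - v||| / ‖x‖`,
with `‖·‖ = N` and `|||·||| = N'`. -/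
noncomputable def grDist (N N' : V → ℝ) (L1 L2 : Submodule ℝ V) : ℝ :=
  sSup {d : ℝ | ∃ x ∈ L1, x ≠ 0 ∧ d = sInf {c : ℝ | ∃ v ∈ L2, c = N' (x - v) / N x}}

/-- `odist(L1,L2) = max_{x ∈ L1, x ≠ 0} inf_{v ∈ L2, v ≠ 0} |||x - v||| / ‖v‖`. -/
noncomputable def grOdist (N N' : V → ℝ) (L1 L2 : Submodule ℝ V) : ℝ :=
  sSup {d : ℝ | ∃ x ∈ L1, x ≠ 0 ∧
    d = sInf {c : ℝ | ∃ v ∈ L2, v ≠ 0 ∧ c = N' (x - v) / N v}}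

/-- The set `Σ_m` of ill-posed `m`-dimensional subspaces. -/
def SigmaIll (K : Set V) (m : ℕ) : Set (Submodule ℝ V) :=
  {L | finrank ℝ L = m ∧ (L : Set V) ∩ K ≠ {0} ∧ (Lᗮ : Set V) ∩ dualCone K ≠ {0}}

/-- `dist(L, Σ_m) = inf_{L' ∈ Σ_m} dist(L, L')`. -/
noncomputable def distToIll (N N' : V → ℝ) (K : Set V) (m : ℕ) (L : Submodule ℝ V) : ℝ :=
  sInf {d : ℝ | ∃ L' ∈ SigmaIll K m, d = grDist N N' L L'}

/-- `odist(Σ_m, L) = inf_{L' ∈ Σ_m} odist(L', L)`. -/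
noncomputable def odistToIll (N N' : V → ℝ) (K : Set V) (m : ℕ) (L : Submodule ℝ V) : ℝ :=
  sInf {d : ℝ | ∃ L' ∈ SigmaIll K m, d = grOdist N N' L' L}

/-- `ν(L) = min {‖y - u‖* : u ∈ K*, y ∈ L^⊥, |||u|||* = 1}`. -/
noncomputable def nu (N N' : V → ℝ) (K : Set V) (L : Submodule ℝ V) : ℝ :=
  sInf {r : ℝ | ∃ u ∈ dualCone K, ∃ y ∈ Lᗮ, dualNorm N' u = 1 ∧ r = dualNorm N (y - u)}

/-- `ν̄(L) = min {|||v - x||| : v ∈ K, x ∈ L, ‖x‖ = 1}`. -/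
noncomputable def nubar (N N' : V → ℝ) (K : Set V) (L : Submodule ℝ V) : ℝ :=
  sInf {r : ℝ | ∃ v ∈ K, ∃ x ∈ L, N x = 1 ∧ r = N' (v - x)}

/-- `λ_v(x) = sup {t : x - t v ∈ K}`. -/
noncomputable def lambdaVec (K : Set V) (v x : V) : ℝ := sSup {t : ℝ | x - t • v ∈ K}

/-- `σ(L) = min_{v ∈ K, |||v||| = 1} max_{x ∈ L, ‖x‖ ≤ 1} λ_v(x)`. -/
noncomputable def sigmaMeas (N N' : V → ℝ) (K : Set V) (L : Submodule ℝ V) : ℝ :=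
  sInf {r : ℝ | ∃ v ∈ K, N' v = 1 ∧
    r = sSup {c : ℝ | ∃ x ∈ L, N x ≤ 1 ∧ c = lambdaVec K v x}}

/-- `Sym(L) = min_{v ∈ K, ‖v‖ = 1} sup {t ≥ 0 : ∃ x ∈ K, ‖x‖ ≤ 1, x + t v ∈ L}`. -/
noncomputable def symMeas (N : V → ℝ) (K : Set V) (L : Submodule ℝ V) : ℝ :=
  sInf {r : ℝ | ∃ v ∈ K, N v = 1 ∧
    r = sSup {t : ℝ | 0 ≤ t ∧ ∃ x ∈ K, N x ≤ 1 ∧ x + t • v ∈ L}}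

/-- The norm `‖·‖_e` induced by the pair `(K, e)`. -/
noncomputable def inducedNorm (K : Set V) (e : V) (x : V) : ℝ :=
  sInf {α : ℝ | 0 ≤ α ∧ x + α • e ∈ K ∧ -x + α • e ∈ K}

/-- The minimal angle `∠(M, C) = min {∠(x, v) : x ∈ M \ {0}, v ∈ C \ {0}}`. -/
noncomputable def coneAngle (M C : Set V) : ℝ :=
  sInf {θ : ℝ | ∃ x ∈ M, x ≠ 0 ∧ ∃ v ∈ C, v ≠ 0 ∧ θ = InnerProductGeometry.angle x v}

lemma norm_sub_sq_eq_angle (y u : V) (hu : ‖u‖ = 1) :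
    ‖y - u‖ ^ 2 = (‖y‖ - Real.cos (InnerProductGeometry.angle y u)) ^ 2
      + Real.sin (InnerProductGeometry.angle y u) ^ 2 := by
  have h := InnerProductGeometry.cos_angle_mul_norm_mul_norm y u
  have h2 := norm_sub_sq_real y u
  rw [hu, mul_one] at h
  rw [h2, hu, Real.sin_sq, ← h]
  ring

lemma sin_angle_le_norm_sub (y u : V) (hu : ‖u‖ = 1) :
    Real.sin (InnerProductGeometry.angle y u) ≤ ‖y - u‖ := by
  refine abs_le_of_sq_le_sq' ?_ (norm_nonneg _) |>.2
  rw [norm_sub_sq_eq_angle y u hu]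
  nlinarith [sq_nonneg (‖y‖ - Real.cos (InnerProductGeometry.angle y u))]

/-- The point of the line through a nonzero `y` nearest to a unit vector `u` is at distance
`sin ∠(y, u)`. -/
lemma exists_smul_norm_sub_eq_sin (y u : V) (hy : y ≠ 0) (hu : ‖u‖ = 1) :
    ∃ s : ℝ, ‖s • y - u‖ = Real.sin (InnerProductGeometry.angle y u) := by
  have hy' : ‖y‖ ≠ 0 := norm_ne_zero_iff.mpr hy
  refine ⟨Real.cos (InnerProductGeometry.angle y u) / ‖y‖, ?_⟩
  refine (sq_eq_sq₀ (norm_nonneg _) (InnerProductGeometry.sin_angle_nonneg _ _)).mp ?_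
  have h := InnerProductGeometry.cos_angle_mul_norm_mul_norm y u
  rw [hu, mul_one] at h
  rw [norm_sub_sq_real, norm_smul, real_inner_smul_left, ← h, hu, mul_pow, Real.norm_eq_abs,
    sq_abs, Real.sin_sq]
  field_simp
  ring

/-- A regular cone in a nontrivial space is a proper subset, so separating an outside point from it
produces a nonzero element of the dual cone. -/
lemma exists_ne_zero_mem_dualCone [FiniteDimensional ℝ V] [Nontrivial V] (K : Set V)
    (hK : IsRegularCone V K) : ∃ u ∈ dualCone K, u ≠ 0 := by
  have h0 : (0 : V) ∈ K := by
    have : (0 : V) ∈ K ∩ (-K) := by rw [hK.pointed]; rfl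
    exact this.1
  obtain ⟨x, hx⟩ : ∃ x, x ∉ K := by
    by_contra! h
    obtain ⟨z, hz⟩ := exists_ne (0 : V)
    have : z ∈ K ∩ (-K) := ⟨h z, h (-z)⟩
    rw [hK.pointed] at this
    exact hz this
  obtain ⟨f, c, hf, hc⟩ := geometric_hahn_banach_closed_point hK.convex hK.closed hx
  have hc0 : 0 < c := by simpa using hf 0 h0
  have hneg : ∀ a ∈ K, f a ≤ 0 := by
    intro a ha
    by_contra! h
    -- the scalar `c / f a` moves `a` onto the separating hyperplane
    have := hf _ (hK.smul_mem (div_pos hc0 h) ha)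
    rw [map_smul, smul_eq_mul, div_mul_cancel₀ _ h.ne'] at this
    exact lt_irrefl _ this
  refine ⟨-(InnerProductSpace.toDual ℝ V).symm f, fun a ha => ?_, fun h => ?_⟩
  · rw [inner_neg_left, InnerProductSpace.toDual_symm_apply]
    linarith [hneg a ha]
  · have hf0 : f = 0 := by simpa using h
    rw [hf0] at hc
    simp at hc
    linarith

lemma smul_mem_dualCone {K : Set V} {u : V} (hu : u ∈ dualCone K) {c : ℝ} (hc : 0 ≤ c) :
    c • u ∈ dualCone K := by
  intro x hx
  rw [real_inner_smul_left]
  exact mul_nonneg hc (hu x hx)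

/-- With both norms Euclidean, if `L ∩ int K ≠ ∅` then `ν(L) = sin ∠(L^⊥, K*)`. -/
theorem stmt_8 {V : Type*} [NormedAddCommGroup V] [InnerProductSpace ℝ V]
    [FiniteDimensional ℝ V]
    (K : Set V) (hK : IsRegularCone V K)
    (m : ℕ) (hm : m < finrank ℝ V)
    (L : Submodule ℝ V) (hL : finrank ℝ L = m)
    (hint : ((L : Set V) ∩ interior K).Nonempty) :
    sInf {r : ℝ | ∃ u ∈ dualCone K, ∃ y ∈ Lᗮ, ‖u‖ = 1 ∧ r = ‖y - u‖} =
      Real.sin (coneAngle (Lᗮ : Set V) (dualCone K)) := by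
  have hV : Nontrivial V := Module.nontrivial_of_finrank_pos (R := ℝ) (by omega)
  obtain ⟨w, hw, hw0⟩ := exists_ne_zero_mem_dualCone K hK
  have hLne : Lᗮ ≠ ⊥ := by
    intro h
    have h1 := Submodule.finrank_add_finrank_orthogonal L
    rw [h, finrank_bot] at h1
    omega
  obtain ⟨z, hz, hz0⟩ := Submodule.exists_mem_ne_zero_of_ne_bot hLne
  set R := {r : ℝ | ∃ u ∈ dualCone K, ∃ y ∈ Lᗮ, ‖u‖ = 1 ∧ r = ‖y - u‖} with hR
  set S := {θ : ℝ | ∃ x ∈ (Lᗮ : Set V), x ≠ 0 ∧ ∃ v ∈ dualCone K, v ≠ 0 ∧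
    θ = InnerProductGeometry.angle x v} with hS
  have hcone : coneAngle (Lᗮ : Set V) (dualCone K) = sInf S := rfl
  have hRbdd : BddBelow R := ⟨0, by rintro _ ⟨u, _, y, _, _, rfl⟩; exact norm_nonneg _⟩
  have hSbdd : BddBelow S :=
    ⟨0, by rintro _ ⟨x, _, _, v, _, _, rfl⟩; exact InnerProductGeometry.angle_nonneg _ _⟩
  have hSne : S.Nonempty := ⟨_, z, hz, hz0, w, hw, hw0, rfl⟩
  have hunit : ∀ v : V, v ≠ 0 → ‖‖v‖⁻¹ • v‖ = 1 := fun v hv => by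
    rw [norm_smul, norm_inv, norm_norm, inv_mul_cancel₀ (norm_ne_zero_iff.mpr hv)]
  have hRne : R.Nonempty :=
    ⟨_, ‖w‖⁻¹ • w, smul_mem_dualCone hw (by positivity), 0, zero_mem _, hunit w hw0, rfl⟩
  rw [hcone]
  apply le_antisymm
  · have hsub : S ⊆ {t : ℝ | sInf R ≤ Real.sin t} := by
      rintro _ ⟨x, hx, hx0, v, hv, hv0, rfl⟩
      have hv' : 0 < ‖v‖⁻¹ := inv_pos.mpr (norm_pos_iff.mpr hv0)
      obtain ⟨s, hs⟩ := exists_smul_norm_sub_eq_sin x (‖v‖⁻¹ • v) hx0 (hunit v hv0)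
      rw [InnerProductGeometry.angle_smul_right_of_pos _ _ hv'] at hs
      exact csInf_le hRbdd ⟨_, smul_mem_dualCone hv hv'.le, s • x,
        Submodule.smul_mem _ _ hx, hunit v hv0, hs.symm⟩
    have hclosed : IsClosed {t : ℝ | sInf R ≤ Real.sin t} :=
      isClosed_le continuous_const Real.continuous_sin
    exact closure_minimal hsub hclosed (csInf_mem_closure hSne hSbdd)
  · apply le_csInf hRne
    rintro _ ⟨u, hu, y, hy, hu1, rfl⟩
    by_cases hy0 : y = 0
    · rw [hy0, zero_sub, norm_neg, hu1]
      exact Real.sin_le_one _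
    rcases le_total (InnerProductGeometry.angle y u) (Real.pi / 2) with hα | hα
    · have hu0 : u ≠ 0 := norm_ne_zero_iff.mp (by rw [hu1]; exact one_ne_zero)
      have hle : sInf S ≤ InnerProductGeometry.angle y u :=
        csInf_le hSbdd ⟨y, hy, hy0, u, hu, hu0, rfl⟩
      have h0 : 0 ≤ sInf S := le_csInf hSne (by
        rintro _ ⟨x, _, _, v, _, _, rfl⟩; exact InnerProductGeometry.angle_nonneg _ _)
      exact (Real.sin_le_sin_of_le_of_le_pi_div_two (by linarith [Real.pi_pos]) hα hle).trans
        (sin_angle_le_norm_sub y u hu1)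
    · refine (Real.sin_le_one _).trans ?_
      have hin : ⟪y, u⟫ ≤ 0 := by
        rw [← InnerProductGeometry.cos_angle_mul_norm_mul_norm y u]
        exact mul_nonpos_of_nonpos_of_nonneg
          (Real.cos_nonpos_of_pi_div_two_le_of_le hα
            (by linarith [InnerProductGeometry.angle_le_pi y u, Real.pi_pos])) (by positivity)
      have h2 := norm_sub_sq_real y u
      rw [hu1] at h2
      nlinarith [sq_nonneg ‖y‖, norm_nonneg (y - u)]
end

section
/- Suppose both norms ‖·‖ and |||·||| equal the Euclidean norm ‖·‖₂. If L ∈ Gr(V,m) satisfies L^⊥ ∩ int(K*) ≠ ∅, then ν̄(L) = sin ∠(L, K). -/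
/-!
Write `α` for the angle between a unit vector `x` and a nonzero vector `v`. Then
`‖v - x‖² = sin² α + (‖v‖ - cos α)²`, so `sin α` is the distance from `x` to the line spanned
by `v`, and when `cos α ≥ 0` it is attained on the ray spanned by `v`.

Let `θ` be the infimum of the angles and `d` the infimum of the distances.
* `sin θ ≤ d`: if `α ≤ π / 2`, then `sin θ ≤ sin α ≤ ‖v - x‖` by monotonicity of the sine;
  otherwise `⟪v, x⟫ ≤ 0`, so that `‖v - x‖ ≥ 1`. The vector `v = 0` gives the distance `1`.
* `d ≤ sin θ`: replacing `x` by `-x ∈ L` if necessary, `cos α ≥ 0` may be assumed without changing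
  `sin α`, hence `d ≤ sin α` for every admissible angle `α`, and this passes to the infimum by
  continuity of the sine.

When `L = 0` both index sets are empty and both sides are `0`.
-/


open Module RealInnerProductSpace

variable {V : Type*} [NormedAddCommGroup V] [InnerProductSpace ℝ V]

open InnerProductGeometry in
/-- Pythagorean decomposition of `v - x` along `v` and orthogonally to it, for a unit vector `x`. -/
lemma norm_sub_sq_eq_sin_sq_add {V : Type*} [NormedAddCommGroup V] [InnerProductSpace ℝ V]
    {x : V} (hx : ‖x‖ = 1) (v : V) :
    ‖v - x‖ ^ 2 = Real.sin (angle x v) ^ 2 + (‖v‖ - Real.cos (angle x v)) ^ 2 := by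
  have h1 := norm_sub_sq_real v x
  have h2 := cos_angle_mul_norm_mul_norm x v
  rw [real_inner_comm x v] at h1
  rw [hx] at h1 h2
  have h3 := Real.sin_sq_add_cos_sq (angle x v)
  nlinarith

open InnerProductGeometry in
/-- If the angle is at most a right angle, the foot of the perpendicular dropped from `x` lies on
the ray spanned by `v`, hence in the cone. -/
lemma exists_mem_cone_norm_sub_eq_sin {V : Type*} [NormedAddCommGroup V] [InnerProductSpace ℝ V]
    {K : Set V} (h0 : (0 : V) ∈ K) (hK : ∀ ⦃c : ℝ⦄, 0 < c → ∀ ⦃x⦄, x ∈ K → c • x ∈ K)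
    {x v : V} (hx : ‖x‖ = 1) (hv : v ∈ K) (hv0 : v ≠ 0) (hc : 0 ≤ Real.cos (angle x v)) :
    ∃ w ∈ K, Real.sin (angle x v) = ‖w - x‖ := by
  have hn : 0 < ‖v‖ := norm_pos_iff.2 hv0
  rcases hc.eq_or_lt with hc | hc
  · refine ⟨0, h0, ?_⟩
    have h := Real.sin_sq_add_cos_sq (angle x v)
    have h1 := sin_angle_nonneg x v
    rw [← hc] at h
    rw [zero_sub, norm_neg, hx]
    nlinarith
  · have ht : 0 < Real.cos (angle x v) / ‖v‖ := div_pos hc hn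
    refine ⟨(Real.cos (angle x v) / ‖v‖) • v, hK ht hv, ?_⟩
    have h := norm_sub_sq_eq_sin_sq_add hx ((Real.cos (angle x v) / ‖v‖) • v)
    rw [angle_smul_right_of_pos _ _ ht, norm_smul, Real.norm_of_nonneg ht.le,
      div_mul_cancel₀ _ hn.ne', sub_self, zero_pow two_ne_zero, add_zero] at h
    exact ((sq_eq_sq₀ (norm_nonneg _) (sin_angle_nonneg _ _)).1 h).symm

/-- With both norms Euclidean, if `L^⊥ ∩ int K* ≠ ∅` then `ν̄(L) = sin ∠(L, K)`. -/
theorem stmt_9 {V : Type*} [NormedAddCommGroup V] [InnerProductSpace ℝ V]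
    [FiniteDimensional ℝ V]
    (K : Set V) (hK : IsRegularCone V K)
    (m : ℕ) (hm : m < finrank ℝ V)
    (L : Submodule ℝ V) (hL : finrank ℝ L = m)
    (hint : ((Lᗮ : Set V) ∩ interior (dualCone K)).Nonempty) :
    sInf {r : ℝ | ∃ v ∈ K, ∃ x ∈ L, ‖x‖ = 1 ∧ r = ‖v - x‖} =
      Real.sin (coneAngle (L : Set V) K) := by
  have h0 : (0 : V) ∈ K := by
    have h : (0 : V) ∈ K ∩ -K := by rw [hK.pointed]; rfl
    exact h.1
  rcases eq_or_ne L ⊥ with hbot | hbot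
  · subst hbot
    have e1 : {r : ℝ | ∃ v ∈ K, ∃ x ∈ (⊥ : Submodule ℝ V), ‖x‖ = 1 ∧ r = ‖v - x‖} = ∅ := by
      ext r
      simp
    have e2 : {θ : ℝ | ∃ x ∈ ((⊥ : Submodule ℝ V) : Set V), x ≠ 0 ∧ ∃ v ∈ K, v ≠ 0 ∧
        θ = InnerProductGeometry.angle x v} = ∅ := by
      ext r
      simp
    rw [coneAngle, e1, e2, Real.sInf_empty, Real.sin_zero]
  obtain ⟨x₀, hx₀, hx₀0⟩ := (Submodule.ne_bot_iff L).1 hbot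
  -- In the nontrivial space `V`, a cone contained in `{0}` has empty interior.
  obtain ⟨v₀, hv₀, hv₀0⟩ : ∃ v ∈ K, v ≠ 0 := by
    by_contra! hcon
    have : Nontrivial V := ⟨x₀, 0, hx₀0⟩
    obtain ⟨p, hp⟩ := hK.solid
    have hsub : interior K ⊆ interior {(0 : V)} := interior_mono fun v hv => hcon v hv
    have := hsub hp
    rw [interior_singleton] at this
    exact this
  have hbddR : BddBelow {r : ℝ | ∃ v ∈ K, ∃ x ∈ L, ‖x‖ = 1 ∧ r = ‖v - x‖} := by
    refine ⟨0, ?_⟩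
    rintro r ⟨v, -, x, -, -, rfl⟩
    exact norm_nonneg _
  have hbddA : BddBelow {θ : ℝ | ∃ x ∈ (L : Set V), x ≠ 0 ∧ ∃ v ∈ K, v ≠ 0 ∧
      θ = InnerProductGeometry.angle x v} := by
    refine ⟨0, ?_⟩
    rintro r ⟨x, -, -, v, -, -, rfl⟩
    exact InnerProductGeometry.angle_nonneg _ _
  have hneA : {θ : ℝ | ∃ x ∈ (L : Set V), x ≠ 0 ∧ ∃ v ∈ K, v ≠ 0 ∧
      θ = InnerProductGeometry.angle x v}.Nonempty := ⟨_, x₀, hx₀, hx₀0, v₀, hv₀, hv₀0, rfl⟩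
  have hunit : ∀ x : V, x ≠ 0 → ‖‖x‖⁻¹ • x‖ = 1 := fun x hx => by
    rw [norm_smul, norm_inv, norm_norm, inv_mul_cancel₀ (norm_ne_zero_iff.2 hx)]
  apply le_antisymm
  -- `{θ | d ≤ sin θ}` is closed, so it contains the infimum of any set of angles inside it.
  · have hclosed : IsClosed {θ : ℝ |
        sInf {r : ℝ | ∃ v ∈ K, ∃ x ∈ L, ‖x‖ = 1 ∧ r = ‖v - x‖} ≤ Real.sin θ} :=
      isClosed_le continuous_const Real.continuous_sin
    refine closure_minimal ?_ hclosed (csInf_mem_closure hneA hbddA)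
    rintro θ ⟨x, hxL, hx, v, hvK, hv, rfl⟩
    have hpos : 0 < ‖x‖⁻¹ := inv_pos.2 (norm_pos_iff.2 hx)
    have hyL : ‖x‖⁻¹ • x ∈ L := L.smul_mem _ hxL
    have hy := hunit x hx
    rw [Set.mem_ofPred_eq, ← InnerProductGeometry.angle_smul_left_of_pos x v hpos]
    generalize ‖x‖⁻¹ • x = y at hyL hy
    rcases le_total 0 (Real.cos (InnerProductGeometry.angle y v)) with hc | hc
    · obtain ⟨w, hw, hwe⟩ := exists_mem_cone_norm_sub_eq_sin h0 hK.smul_mem hy hvK hv hc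
      exact csInf_le hbddR ⟨w, hw, y, hyL, hy, hwe⟩
    · obtain ⟨w, hw, hwe⟩ := exists_mem_cone_norm_sub_eq_sin (x := -y) h0 hK.smul_mem
        (by rwa [norm_neg]) hvK hv
        (by rw [InnerProductGeometry.angle_neg_left, Real.cos_pi_sub]; linarith)
      rw [InnerProductGeometry.angle_neg_left, Real.sin_pi_sub] at hwe
      exact csInf_le hbddR ⟨w, hw, -y, L.neg_mem hyL, by rwa [norm_neg], hwe⟩
  · refine le_csInf ⟨_, 0, h0, _, L.smul_mem ‖x₀‖⁻¹ hx₀, hunit x₀ hx₀0, rfl⟩ ?_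
    rintro r ⟨v, hv, x, hxL, hx, rfl⟩
    have hx0 : x ≠ 0 := norm_ne_zero_iff.1 (by rw [hx]; exact one_ne_zero)
    rcases eq_or_ne v 0 with rfl | hv0
    · rw [zero_sub, norm_neg, hx]
      exact Real.sin_le_one _
    rcases le_total (InnerProductGeometry.angle x v) (Real.pi / 2) with ha | ha
    · have hnn : 0 ≤ coneAngle (L : Set V) K := le_csInf hneA (by
        rintro r ⟨x, -, -, v, -, -, rfl⟩
        exact InnerProductGeometry.angle_nonneg _ _)
      have hle : coneAngle (L : Set V) K ≤ InnerProductGeometry.angle x v :=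
        csInf_le hbddA ⟨x, hxL, hx0, v, hv, hv0, rfl⟩
      refine (Real.sin_le_sin_of_le_of_le_pi_div_two (by linarith [Real.pi_pos]) ha hle).trans ?_
      refine (abs_le_of_sq_le_sq' ?_ (norm_nonneg _)).2
      rw [norm_sub_sq_eq_sin_sq_add hx v]
      exact le_add_of_nonneg_right (sq_nonneg _)
    · refine (Real.sin_le_one _).trans ?_
      have h1 := norm_sub_sq_real v x
      have h2 := InnerProductGeometry.cos_angle_mul_norm_mul_norm x v
      have h3 := Real.cos_nonpos_of_pi_div_two_le_of_le ha
        (by linarith [InnerProductGeometry.angle_le_pi x v, Real.pi_pos])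
      have h4 := mul_nonpos_of_nonpos_of_nonneg h3 (mul_nonneg (norm_nonneg x) (norm_nonneg v))
      rw [h2, real_inner_comm] at h4
      rw [hx] at h1
      nlinarith [sq_nonneg ‖v‖, norm_nonneg (v - x)]
end

section
/- Let e ∈ int(K) and suppose |||·||| = ‖·‖_e is the norm induced by (K,e), while ‖·‖ is an arbitrary norm on V. Then for all L ∈ Gr(V,m): ν(L) = min_{u∈Δ(K*)} max_{x∈L, ‖x‖≤1} ⟨x,u⟩ = max_{x∈L, ‖x‖≤1} min_{u∈Δ(K*)} ⟨x,u⟩ = max_{x∈L, ‖x‖≤1} λ_e(x). -/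
/-!
The four quantities are compared through `f u = sup {⟪x, u⟫ : x ∈ L, N x ≤ 1}` for `u ∈ Δ(K*)`.

* For `u ∈ K*` the dual of the induced norm is `⟪u, e⟫` (`dualNorm_inducedNorm`), so the constraint
  in `nu` says `u ∈ Δ(K*)`. The functional `⟪u, ·⟫` restricted to `L` is dominated by `f u * N`, and
  its Hahn–Banach extensions to `V` are the functionals represented by `u - y` with `y ∈ Lᗮ`;
  hence the infimum over `y` equals `f u` (`exists_dualNorm_le` and `inner_le_dualNorm_sub`).
* The inequalities `sup λ_e ≤ sup inf ≤ inf sup` are weak duality. They close up into equalities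
  because `inf sup ≤ sup λ_e`: for `s > sup λ_e`, the convex set `{x - s • e : x ∈ L, N x ≤ 1}`
  misses `K`, and a functional separating it from `K`, normalised at `e`, is an element `u` of
  `Δ(K*)` with `f u ≤ s` (`exists_separating`).
-/

open Module RealInnerProductSpace

variable {V : Type*} [NormedAddCommGroup V] [InnerProductSpace ℝ V]

/-! ### Norms and dual norms -/

/-- Every linear functional on a finite-dimensional space is bounded with respect to any norm. -/
theorem IsNorm.exists_bound {W : Type*} [AddCommGroup W] [Module ℝ W] [FiniteDimensional ℝ W]
    {N : W → ℝ} (hN : IsNorm W N) (g : W →ₗ[ℝ] ℝ) : ∃ C, 0 ≤ C ∧ ∀ x, g x ≤ C * N x := by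
  let A : AddGroupNorm W :=
    { toFun := N
      map_zero' := (hN.eq_zero_iff 0).2 rfl
      add_le' := hN.add_le
      neg' := fun x => by simpa using hN.smul_eq (-1) x
      eq_zero_of_map_eq_zero' := fun x => (hN.eq_zero_iff x).1 }
  let _ : NormedAddCommGroup W := A.toNormedAddCommGroup
  let _ : NormedSpace ℝ W := ⟨fun c x => (hN.smul_eq c x).le⟩
  refine ⟨‖LinearMap.toContinuousLinearMap g‖, norm_nonneg _, fun x => ?_⟩
  exact (le_abs_self _).trans ((LinearMap.toContinuousLinearMap g).le_opNorm x)

theorem IsNorm.map_zero {N : V → ℝ} (hN : IsNorm V N) : N 0 = 0 := (hN.eq_zero_iff 0).2 rfl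

theorem dualNorm_le {N : V → ℝ} {u : V} {C : ℝ} (hC : 0 ≤ C)
    (h : ∀ x, ⟪u, x⟫ ≤ C * N x) : dualNorm N u ≤ C := by
  refine Real.sSup_le ?_ hC
  rintro _ ⟨x, hx, rfl⟩
  simpa [hx] using h x

section DualNorm

variable [FiniteDimensional ℝ V] {N : V → ℝ}

theorem bddAbove_dualNorm (hN : IsNorm V N) (u : V) :
    BddAbove {r : ℝ | ∃ x : V, N x = 1 ∧ r = ⟪u, x⟫} := by
  obtain ⟨C, -, hC⟩ := hN.exists_bound (innerₛₗ ℝ u)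
  refine ⟨C, ?_⟩
  rintro _ ⟨x, hx, rfl⟩
  simpa [hx] using hC x

theorem inner_le_dualNorm_mul (hN : IsNorm V N) (u x : V) : ⟪u, x⟫ ≤ dualNorm N u * N x := by
  by_cases hx : x = 0
  · simp [hx, hN.map_zero]
  have hpos : 0 < N x := lt_of_le_of_ne (hN.nonneg x) (fun h => hx ((hN.eq_zero_iff x).1 h.symm))
  have h1 : N ((N x)⁻¹ • x) = 1 := by
    rw [hN.smul_eq, abs_of_pos (inv_pos.2 hpos), inv_mul_cancel₀ hpos.ne']
  have h2 : ⟪u, (N x)⁻¹ • x⟫ ≤ dualNorm N u := le_csSup (bddAbove_dualNorm hN u) ⟨_, h1, rfl⟩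
  rw [inner_smul_right, inv_mul_eq_div, div_le_iff₀ hpos] at h2
  exact h2

theorem dualNorm_nonneg (hN : IsNorm V N) (u : V) : 0 ≤ dualNorm N u := by
  by_cases h : ∃ x : V, N x = 1
  · obtain ⟨x, hx⟩ := h
    have h1 := inner_le_dualNorm_mul hN u x
    have h2 := inner_le_dualNorm_mul hN u (-x)
    have hneg : N (-x) = N x := by simpa using hN.smul_eq (-1) x
    rw [hneg, hx, inner_neg_right] at h2
    rw [hx] at h1
    linarith
  · -- without unit vectors `dualNorm` is the supremum of the empty set, hence zero
    refine le_of_eq ?_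
    unfold dualNorm
    rw [show {r : ℝ | ∃ x : V, N x = 1 ∧ r = ⟪u, x⟫} = ∅ from ?_, Real.sSup_empty]
    ext r
    refine ⟨?_, fun hr => hr.elim⟩
    rintro ⟨x, hx, -⟩
    exact (h ⟨x, hx⟩).elim

theorem bddAbove_inner (hN : IsNorm V N) (L : Submodule ℝ V) (u : V) :
    BddAbove {c : ℝ | ∃ x ∈ L, N x ≤ 1 ∧ c = ⟪x, u⟫} := by
  refine ⟨dualNorm N u, ?_⟩
  rintro _ ⟨x, -, hx, rfl⟩
  rw [real_inner_comm]
  exact (inner_le_dualNorm_mul hN u x).trans (mul_le_of_le_one_right (dualNorm_nonneg hN u) hx)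

theorem inner_le_dualNorm_sub (hN : IsNorm V N) {L : Submodule ℝ V} {x y : V} (u : V)
    (hx : x ∈ L) (hx1 : N x ≤ 1) (hy : y ∈ Lᗮ) : ⟪x, u⟫ ≤ dualNorm N (y - u) := by
  have h := inner_le_dualNorm_mul hN (y - u) (-x)
  have hneg : N (-x) = N x := by simpa using hN.smul_eq (-1) x
  rw [hneg, inner_neg_right, inner_sub_left, Submodule.inner_left_of_mem_orthogonal hx hy] at h
  have h2 := mul_le_of_le_one_right (dualNorm_nonneg hN (y - u)) hx1
  rw [real_inner_comm]
  linarith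

/-- Hahn–Banach: `⟪u, ·⟫` on `L` extends to `V` without increasing its `N`-norm. -/
theorem exists_dualNorm_le (hN : IsNorm V N) (L : Submodule ℝ V) (u : V) :
    ∃ y ∈ Lᗮ, dualNorm N (y - u) ≤ sSup {c : ℝ | ∃ x ∈ L, N x ≤ 1 ∧ c = ⟪x, u⟫} := by
  set s := sSup {c : ℝ | ∃ x ∈ L, N x ≤ 1 ∧ c = ⟪x, u⟫} with hs
  have hle : ∀ x ∈ L, N x ≤ 1 → ⟪x, u⟫ ≤ s := fun x hx h1 =>
    le_csSup (bddAbove_inner hN L u) ⟨x, hx, h1, rfl⟩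
  have hs0 : 0 ≤ s := by simpa using hle 0 L.zero_mem (by simp [hN.map_zero])
  obtain ⟨g, hg1, hg2⟩ := exists_extension_of_le_sublinear
    ⟨L, (innerₛₗ ℝ u).domRestrict L⟩ (fun x => s * N x)
    (fun c hc x => by simp only [hN.smul_eq, abs_of_pos hc]; ring)
    (fun x y => by
      have := mul_le_mul_of_nonneg_left (hN.add_le x y) hs0
      linarith)
    (fun x => by
      obtain ⟨x, hx⟩ := x
      change ⟪u, x⟫ ≤ s * N x
      by_cases hx0 : x = 0
      · simp [hx0, hN.map_zero]
      have hpos : 0 < N x :=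
        lt_of_le_of_ne (hN.nonneg x) (fun h => hx0 ((hN.eq_zero_iff x).1 h.symm))
      have h := hle ((N x)⁻¹ • x) (L.smul_mem _ hx) (by
        rw [hN.smul_eq, abs_of_pos (inv_pos.2 hpos), inv_mul_cancel₀ hpos.ne'])
      rw [inner_smul_left] at h
      simp only [conj_trivial] at h
      rw [inv_mul_eq_div, div_le_iff₀ hpos, real_inner_comm] at h
      exact h)
  set w : V := (InnerProductSpace.toDual ℝ V).symm (LinearMap.toContinuousLinearMap g) with hw
  have hwg : ∀ x, ⟪w, x⟫ = g x := fun x => by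
    rw [hw, InnerProductSpace.toDual_symm_apply]; rfl
  refine ⟨u - w, ?_, ?_⟩
  · rw [Submodule.mem_orthogonal']
    intro x hx
    rw [inner_sub_left, hwg, hg1 ⟨x, hx⟩]
    exact sub_self _
  · refine dualNorm_le hs0 fun x => ?_
    have h := hg2 (-x)
    have hneg : N (-x) = N x := by simpa using hN.smul_eq (-1) x
    simp only [hneg, map_neg] at h
    rw [show u - w - u = -w by abel, inner_neg_left, hwg]
    exact h

end DualNorm

/-! ### Cones and the induced norm -/

section Cone

variable {K : Set V} {e : V}

theorem IsRegularCone.zero_mem (hK : IsRegularCone V K) : (0 : V) ∈ K := by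
  have : (0 : V) ∈ K ∩ (-K) := by rw [hK.pointed]; rfl
  exact this.1

theorem IsRegularCone.exists_add_smul_mem (hK : IsRegularCone V K) (he : e ∈ interior K) (x : V) :
    ∃ t : ℝ, 0 < t ∧ x + t • e ∈ K := by
  have hc : Filter.Tendsto (fun r : ℝ => e + r • x) (nhdsWithin 0 (Set.Ioi 0)) (nhds e) := by
    have : Continuous fun r : ℝ => e + r • x := by fun_prop
    simpa using (this.tendsto 0).mono_left nhdsWithin_le_nhds
  have h := (hc.eventually (mem_interior_iff_mem_nhds.1 he)).and self_mem_nhdsWithin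
  obtain ⟨r, hr, hr0⟩ := h.exists
  have hr0 : 0 < r := hr0
  refine ⟨r⁻¹, inv_pos.2 hr0, ?_⟩
  have := hK.smul_mem (inv_pos.2 hr0) hr
  rwa [smul_add, smul_smul, inv_mul_cancel₀ hr0.ne', one_smul, add_comm] at this

theorem IsRegularCone.neg_notMem [Nontrivial V] (hK : IsRegularCone V K) (he : e ∈ interior K) :
    -e ∉ K := by
  intro hne
  have he0 : e = 0 := by
    have : e ∈ K ∩ (-K) := ⟨interior_subset he, hne⟩
    rw [hK.pointed] at this
    exact this
  obtain ⟨x, hx⟩ := exists_ne (0 : V)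
  -- an interior origin makes the cone absorb every vector, contradicting pointedness
  have hall : ∀ z : V, z ∈ K := fun z => by
    obtain ⟨t, -, ht⟩ := hK.exists_add_smul_mem he z
    simpa [he0] using ht
  have : x ∈ K ∩ (-K) := ⟨hall x, hall (-x)⟩
  rw [hK.pointed] at this
  exact hx this

/-- A nonempty convex set missing `K` is separated from `K` by a functional in `K*`
normalised at the interior point `e`. -/
theorem IsRegularCone.exists_separating [CompleteSpace V] (hK : IsRegularCone V K)
    (he : e ∈ interior K) {A : Set V} (hA : Convex ℝ A) (hne : A.Nonempty) (hd : Disjoint K A) :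
    ∃ u ∈ dualCone K, ⟪u, e⟫ = 1 ∧ ∀ a ∈ A, ⟪u, a⟫ ≤ 0 := by
  obtain ⟨f, c, hf1, hf2⟩ := geometric_hahn_banach_open hK.convex.interior isOpen_interior hA
    (hd.mono_left interior_subset)
  have hscale : ∀ t : ℝ, 0 < t → ∀ x ∈ interior K, t • x ∈ interior K := by
    intro t ht x hx
    have hsub : (fun z => t • z) '' interior K ⊆ interior K := by
      refine interior_maximal ?_ (isOpenMap_smul₀ ht.ne' _ isOpen_interior)
      rintro _ ⟨z, hz, rfl⟩
      exact hK.smul_mem ht (interior_subset hz)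
    exact hsub ⟨x, hx, rfl⟩
  have hfs : ∀ t : ℝ, 0 < t → ∀ x ∈ interior K, t * f x < c := fun t ht x hx => by
    simpa using hf1 _ (hscale t ht x hx)
  have hint : ∀ x ∈ interior K, f x ≤ 0 := by
    intro x hx
    by_contra! hpos
    have h := hfs ((|c| + 1) / f x) (by positivity) x hx
    rw [div_mul_cancel₀ _ hpos.ne'] at h
    linarith [le_abs_self c]
  have hc : 0 ≤ c := by
    by_contra! hneg
    have hfe : f e < 0 := (hf1 e he).trans hneg
    have h := hfs (c / f e / 2) (by have := div_pos_of_neg_of_neg hneg hfe; positivity) e he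
    have : c / f e / 2 * f e = c / 2 := by
      have := hfe.ne
      field_simp
    linarith
  have hKf : ∀ x ∈ K, f x ≤ 0 := by
    intro x hx
    have hcl : x ∈ closure (interior K) := by
      rw [hK.convex.closure_interior_eq_closure_of_nonempty_interior hK.solid]
      exact subset_closure hx
    exact closure_minimal (t := {z | f z ≤ 0}) hint
      (isClosed_le f.continuous continuous_const) hcl
  -- if `f e = 0`, then moving a point of `A` into `K` along `e` leaves `f` unchanged
  have hfe : f e < 0 := by
    refine lt_of_le_of_ne (hint e he) fun h0 => ?_
    obtain ⟨a, ha⟩ := hne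
    obtain ⟨t, -, ht⟩ := hK.exists_add_smul_mem he a
    have h1 := hKf _ ht
    simp only [map_add, map_smul, h0, smul_zero, add_zero] at h1
    linarith [hf2 a ha, hf1 e he]
  have hu : ∀ x, ⟪(f e)⁻¹ • (InnerProductSpace.toDual ℝ V).symm f, x⟫ = (f e)⁻¹ * f x := by
    intro x
    rw [inner_smul_left, InnerProductSpace.toDual_symm_apply]
    simp
  have hinv : (f e)⁻¹ < 0 := inv_lt_zero.2 hfe
  refine ⟨(f e)⁻¹ • (InnerProductSpace.toDual ℝ V).symm f, fun x hx => ?_, ?_, fun a ha => ?_⟩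
  · rw [hu]
    exact mul_nonneg_of_nonpos_of_nonpos hinv.le (hKf x hx)
  · rw [hu, inv_mul_cancel₀ hfe.ne]
  · rw [hu]
    exact mul_nonpos_of_nonpos_of_nonneg hinv.le (hc.trans (hf2 a ha))

theorem inducedNorm_self [Nontrivial V] (hK : IsRegularCone V K) (he : e ∈ interior K) :
    inducedNorm K e e = 1 := by
  have heK := interior_subset he
  have hmem : (1 : ℝ) ∈ {α : ℝ | 0 ≤ α ∧ e + α • e ∈ K ∧ -e + α • e ∈ K} := by
    refine ⟨zero_le_one, ?_, ?_⟩
    · rw [one_smul, ← two_smul ℝ e]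
      exact hK.smul_mem two_pos heK
    · simpa using hK.zero_mem
  refine le_antisymm (csInf_le ⟨0, fun α h => h.1⟩ hmem) (le_csInf ⟨1, hmem⟩ ?_)
  rintro α ⟨-, -, h⟩
  by_contra! hlt
  have hpos : 0 < 1 - α := by linarith
  have h2 := hK.smul_mem (inv_pos.2 hpos) h
  rw [show -e + α • e = (1 - α) • (-e) by module, smul_smul, inv_mul_cancel₀ hpos.ne',
    one_smul] at h2
  exact hK.neg_notMem he h2

theorem dualNorm_inducedNorm [Nontrivial V] (hK : IsRegularCone V K) (he : e ∈ interior K)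
    {u : V} (hu : u ∈ dualCone K) : dualNorm (inducedNorm K e) u = ⟪u, e⟫ := by
  have hue : 0 ≤ ⟪u, e⟫ := hu e (interior_subset he)
  have hub : ∀ r ∈ {r : ℝ | ∃ x : V, inducedNorm K e x = 1 ∧ r = ⟪u, x⟫}, r ≤ ⟪u, e⟫ := by
    rintro _ ⟨x, hx, rfl⟩
    have hne : {α : ℝ | 0 ≤ α ∧ x + α • e ∈ K ∧ -x + α • e ∈ K}.Nonempty := by
      by_contra h
      rw [inducedNorm, Set.not_nonempty_iff_eq_empty.1 h, Real.sInf_empty] at hx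
      exact zero_ne_one hx
    have hα : ∀ ε : ℝ, 0 < ε → ⟪u, x⟫ ≤ (1 + ε) * ⟪u, e⟫ := by
      intro ε hε
      obtain ⟨α, ⟨-, -, h⟩, hlt⟩ := exists_lt_of_csInf_lt hne
        (show inducedNorm K e x < 1 + ε by linarith)
      have h2 := hu _ h
      rw [inner_add_right, inner_neg_right, inner_smul_right] at h2
      nlinarith
    have hlim : Filter.Tendsto (fun ε : ℝ => (1 + ε) * ⟪u, e⟫) (nhdsWithin 0 (Set.Ioi 0))
        (nhds ⟪u, e⟫) := by
      have : Continuous fun ε : ℝ => (1 + ε) * ⟪u, e⟫ := by fun_prop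
      simpa using (this.tendsto 0).mono_left nhdsWithin_le_nhds
    exact ge_of_tendsto hlim (Filter.eventually_of_mem self_mem_nhdsWithin hα)
  have hmem : ⟪u, e⟫ ∈ {r : ℝ | ∃ x : V, inducedNorm K e x = 1 ∧ r = ⟪u, x⟫} :=
    ⟨e, inducedNorm_self hK he, rfl⟩
  exact le_antisymm (csSup_le ⟨_, hmem⟩ hub) (le_csSup ⟨_, hub⟩ hmem)

theorem le_inner_of_sub_smul_mem {u x : V} {t : ℝ} (hu : u ∈ dualCone K) (hue : ⟪u, e⟫ = 1)
    (h : x - t • e ∈ K) : t ≤ ⟪x, u⟫ := by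
  have := hu _ h
  rw [inner_sub_right, inner_smul_right, hue, real_inner_comm] at this
  linarith

end Cone

/-! ### Minimax equalities -/

/-- With `|||·||| = ‖·‖_e` the norm induced by `(K, e)`:
`ν(L) = min_{u ∈ Δ(K*)} max_{x ∈ L, ‖x‖ ≤ 1} ⟨x,u⟩ = max_{x ∈ L, ‖x‖ ≤ 1} min_{u ∈ Δ(K*)} ⟨x,u⟩
      = max_{x ∈ L, ‖x‖ ≤ 1} λ_e(x)`, where `Δ(K*) = {u ∈ K* : ⟨u,e⟩ = 1}`. -/
theorem stmt_10 {V : Type*} [NormedAddCommGroup V] [InnerProductSpace ℝ V]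
    [FiniteDimensional ℝ V]
    (N : V → ℝ) (hN : IsNorm V N)
    (K : Set V) (hK : IsRegularCone V K)
    (e : V) (he : e ∈ interior K)
    (m : ℕ) (hm : m < finrank ℝ V)
    (L : Submodule ℝ V) (hL : finrank ℝ L = m) :
    nu N (inducedNorm K e) K L =
      sInf {r : ℝ | ∃ u ∈ dualCone K, ⟪u, e⟫ = 1 ∧
        r = sSup {c : ℝ | ∃ x ∈ L, N x ≤ 1 ∧ c = ⟪x, u⟫}} ∧
    nu N (inducedNorm K e) K L =
      sSup {r : ℝ | ∃ x ∈ L, N x ≤ 1 ∧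
        r = sInf {c : ℝ | ∃ u ∈ dualCone K, ⟪u, e⟫ = 1 ∧ c = ⟪x, u⟫}} ∧
    nu N (inducedNorm K e) K L =
      sSup {r : ℝ | ∃ x ∈ L, N x ≤ 1 ∧ r = lambdaVec K e x} := by
  have : Nontrivial V := Module.nontrivial_of_finrank_pos (R := ℝ) (by omega)
  have : CompleteSpace V := FiniteDimensional.complete ℝ V
  set f : V → ℝ := fun u => sSup {c : ℝ | ∃ x ∈ L, N x ≤ 1 ∧ c = ⟪x, u⟫} with hf
  set g : V → ℝ := fun x => sInf {c : ℝ | ∃ u ∈ dualCone K, ⟪u, e⟫ = 1 ∧ c = ⟪x, u⟫} with hg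
  have hN0 : N 0 ≤ 1 := by simp [hN.map_zero]
  have hfle : ∀ u, ∀ x ∈ L, N x ≤ 1 → ⟪x, u⟫ ≤ f u := fun u x hx h1 =>
    le_csSup (bddAbove_inner hN L u) ⟨x, hx, h1, rfl⟩
  have hf0 : ∀ u, 0 ≤ f u := fun u => by simpa using hfle u 0 L.zero_mem hN0
  obtain ⟨u₀, hu₀, hu₀e, -⟩ := hK.exists_separating he (convex_singleton (-e))
    (Set.singleton_nonempty _) (Set.disjoint_singleton_right.2 (hK.neg_notMem he))
  have hlne : ∀ x, {t : ℝ | x - t • e ∈ K}.Nonempty := fun x => by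
    obtain ⟨t, -, ht⟩ := hK.exists_add_smul_mem he x
    exact ⟨-t, by simpa [sub_eq_add_neg] using ht⟩
  have hgbdd : ∀ x, BddBelow {c : ℝ | ∃ u ∈ dualCone K, ⟪u, e⟫ = 1 ∧ c = ⟪x, u⟫} := fun x => by
    obtain ⟨t, ht⟩ := hlne x
    refine ⟨t, ?_⟩
    rintro _ ⟨u, hu, hue, rfl⟩
    exact le_inner_of_sub_smul_mem hu hue ht
  have hgle : ∀ u ∈ dualCone K, ⟪u, e⟫ = 1 → ∀ x, g x ≤ ⟪x, u⟫ := fun u hu hue x =>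
    csInf_le (hgbdd x) ⟨u, hu, hue, rfl⟩
  have hlg : ∀ x, lambdaVec K e x ≤ g x := fun x => by
    refine csSup_le (hlne x) fun t ht => le_csInf ⟨_, u₀, hu₀, hu₀e, rfl⟩ ?_
    rintro _ ⟨u, hu, hue, rfl⟩
    exact le_inner_of_sub_smul_mem hu hue ht
  set P := sInf {r : ℝ | ∃ u ∈ dualCone K, ⟪u, e⟫ = 1 ∧ r = f u} with hP
  set Q := sSup {r : ℝ | ∃ x ∈ L, N x ≤ 1 ∧ r = g x} with hQ
  set R := sSup {r : ℝ | ∃ x ∈ L, N x ≤ 1 ∧ r = lambdaVec K e x} with hR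
  have hPbdd : BddBelow {r : ℝ | ∃ u ∈ dualCone K, ⟪u, e⟫ = 1 ∧ r = f u} := by
    refine ⟨0, ?_⟩
    rintro _ ⟨u, -, -, rfl⟩
    exact hf0 u
  have hQbdd : BddAbove {r : ℝ | ∃ x ∈ L, N x ≤ 1 ∧ r = g x} := by
    refine ⟨f u₀, ?_⟩
    rintro _ ⟨x, hx, h1, rfl⟩
    exact (hgle u₀ hu₀ hu₀e x).trans (hfle u₀ x hx h1)
  have hRbdd : BddAbove {r : ℝ | ∃ x ∈ L, N x ≤ 1 ∧ r = lambdaVec K e x} := by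
    refine ⟨f u₀, ?_⟩
    rintro _ ⟨x, hx, h1, rfl⟩
    exact (hlg x).trans ((hgle u₀ hu₀ hu₀e x).trans (hfle u₀ x hx h1))
  have hnuP : nu N (inducedNorm K e) K L = P := by
    obtain ⟨y₀, hy₀, -⟩ := exists_dualNorm_le hN L u₀
    have hbdd : BddBelow {r : ℝ | ∃ u ∈ dualCone K, ∃ y ∈ Lᗮ,
        dualNorm (inducedNorm K e) u = 1 ∧ r = dualNorm N (y - u)} := by
      refine ⟨0, ?_⟩
      rintro _ ⟨u, -, y, -, -, rfl⟩
      exact dualNorm_nonneg hN _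
    refine le_antisymm ?_ ?_
    · refine le_csInf ⟨_, u₀, hu₀, hu₀e, rfl⟩ ?_
      rintro _ ⟨u, hu, hue, rfl⟩
      obtain ⟨y, hy, hle⟩ := exists_dualNorm_le hN L u
      exact (csInf_le hbdd ⟨u, hu, y, hy, (dualNorm_inducedNorm hK he hu).trans hue, rfl⟩).trans hle
    · refine le_csInf ⟨_, u₀, hu₀, y₀, hy₀, (dualNorm_inducedNorm hK he hu₀).trans hu₀e, rfl⟩ ?_
      rintro _ ⟨u, hu, y, hy, hu1, rfl⟩
      rw [dualNorm_inducedNorm hK he hu] at hu1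
      refine (csInf_le hPbdd ⟨u, hu, hu1, rfl⟩).trans (csSup_le ⟨_, 0, L.zero_mem, hN0, rfl⟩ ?_)
      rintro _ ⟨x, hx, h1, rfl⟩
      exact inner_le_dualNorm_sub hN u hx h1 hy
  have hRQ : R ≤ Q := by
    refine csSup_le ⟨_, 0, L.zero_mem, hN0, rfl⟩ ?_
    rintro _ ⟨x, hx, h1, rfl⟩
    exact (hlg x).trans (le_csSup hQbdd ⟨x, hx, h1, rfl⟩)
  have hQP : Q ≤ P := by
    refine csSup_le ⟨_, 0, L.zero_mem, hN0, rfl⟩ ?_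
    rintro _ ⟨x, hx, h1, rfl⟩
    refine le_csInf ⟨_, u₀, hu₀, hu₀e, rfl⟩ ?_
    rintro _ ⟨u, hu, hue, rfl⟩
    exact (hgle u hu hue x).trans (hfle u x hx h1)
  -- strong duality: separate `K` from the unit ball of `L` shifted by slightly more than `R`
  have hPR : P ≤ R := by
    refine le_of_forall_pos_le_add fun ε hε => ?_
    have hconv : Convex ℝ {z : V | ∃ x ∈ L, N x ≤ 1 ∧ z = x - (R + ε) • e} := by
      rintro _ ⟨x, hx, hx1, rfl⟩ _ ⟨y, hy, hy1, rfl⟩ a b ha hb hab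
      refine ⟨a • x + b • y, L.add_mem (L.smul_mem _ hx) (L.smul_mem _ hy), ?_, ?_⟩
      · refine (hN.add_le _ _).trans ?_
        rw [hN.smul_eq, hN.smul_eq, abs_of_nonneg ha, abs_of_nonneg hb]
        nlinarith
      · obtain rfl : b = 1 - a := by linarith
        module
    have hdisj : Disjoint K {z : V | ∃ x ∈ L, N x ≤ 1 ∧ z = x - (R + ε) • e} := by
      rw [Set.disjoint_right]
      rintro _ ⟨x, hx, h1, rfl⟩ hmem
      have hb : BddAbove {t : ℝ | x - t • e ∈ K} :=
        ⟨⟪x, u₀⟫, fun t ht => le_inner_of_sub_smul_mem hu₀ hu₀e ht⟩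
      have h2 : R + ε ≤ lambdaVec K e x := le_csSup hb hmem
      have h3 : lambdaVec K e x ≤ R := le_csSup hRbdd ⟨x, hx, h1, rfl⟩
      linarith
    obtain ⟨u, hu, hue, hle⟩ := hK.exists_separating he hconv
      ⟨_, 0, L.zero_mem, hN0, rfl⟩ hdisj
    refine (csInf_le hPbdd ⟨u, hu, hue, rfl⟩).trans (csSup_le ⟨_, 0, L.zero_mem, hN0, rfl⟩ ?_)
    rintro _ ⟨x, hx, h1, rfl⟩
    have h := hle _ ⟨x, hx, h1, rfl⟩
    rw [inner_sub_right, inner_smul_right, hue, real_inner_comm] at h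
    linarith
  exact ⟨hnuP, hnuP.trans (le_antisymm (hPR.trans hRQ) hQP),
    hnuP.trans (le_antisymm hPR (hRQ.trans hQP))⟩
end

section
/- Assume L ∈ Gr(V,m) satisfies L ∩ int(K) ≠ ∅ and that both norms ‖·‖ and |||·||| equal the Euclidean norm ‖·‖₂. Then 1 ≤ σ(L)/ν(L) ≤ 1/cos(Θ(K*,K)), where Θ(K*,K) := max_{u∈K*\{0}} min_{v∈K\{0}} ∠(u,v). In particular, if in addition K = K*, then ν(L) = σ(L). -/
/-!
Write `ν` for the infimum of `‖y - u‖` over unit `u ∈ K*` and `y ∈ Lᗮ`, and, for a unit `v ∈ K`,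
write `σ_v` for the supremum of `λ_v` over the unit ball of `L`, so that `σ = inf_v σ_v`.
Both inequalities are conic duality for the problem `max {t : x - t v ∈ K, x ∈ L, ‖x‖ ≤ 1}`.

* Weak duality (`lambdaVec_le`): if `x - t v ∈ K`, `u ∈ K*`, `y ∈ Lᗮ`, then
  `t ⟪u, v⟫ ≤ ⟪u, x⟫ = ⟪u - y, x⟫ ≤ ‖y - u‖`. Hence `σ cos ∠(u, v) ≤ ‖y - u‖` for all unit
  `u ∈ K*` and nonzero `v ∈ K`. Taking the best `v`, then the best `u` and `y`, yields
  `σ cos Θ ≤ ν`.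
* Strong duality (`exists_sub_smul_mem`): if the compact convex set `{x - ν v : x ∈ L, ‖x‖ ≤ 1}`
  missed `K`, a separating functional `u ∈ K*` would satisfy
  `‖P_L u‖ < ν ⟪u, v⟫ ≤ ν ‖u‖`, against the definition of `ν`. Hence `ν ≤ σ_v` for every `v`.

A ball around a point of `L ∩ int K` lying in `K` shows `ν > 0`, and also `Θ < π / 2`, so that
`cos Θ > 0` (`mul_norm_le_inner_of_ball_subset`). If `K = K*`, the choice `v = u` shows `Θ = 0`,
and both bounds become `1`.
-/

open Module RealInnerProductSpace

variable {V : Type*} [NormedAddCommGroup V] [InnerProductSpace ℝ V]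

/-- `Θ(K*, K) = max_{u ∈ K* \ {0}} min_{v ∈ K \ {0}} ∠(u, v)`. -/
noncomputable def thetaKK (K : Set V) : ℝ :=
  sSup {θ : ℝ | ∃ u ∈ dualCone K, u ≠ 0 ∧
    θ = sInf {φ : ℝ | ∃ v ∈ K, v ≠ 0 ∧ φ = InnerProductGeometry.angle u v}}

/-- Separation of a compact convex set from a closed convex cone: the separating functional,
being bounded below on the cone, lies in the dual cone, and the threshold can be taken to be `0`. -/
lemma exists_dualCone_inner_neg [FiniteDimensional ℝ V] {K : Set V} (hK : IsRegularCone V K)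
    {C : Set V} (hC : Convex ℝ C) (hCc : IsCompact C) (hd : Disjoint C K) :
    ∃ u ∈ dualCone K, ∀ x ∈ C, ⟪u, x⟫ < 0 := by
  have : CompleteSpace V := FiniteDimensional.complete ℝ V
  obtain ⟨f, a, b, hfa, hab, hfb⟩ := geometric_hahn_banach_compact_closed hC hCc hK.convex
    hK.closed hd
  have h0 : (0 : V) ∈ K := by
    have h : (0 : V) ∈ K ∩ -K := by rw [hK.pointed]; rfl
    exact h.1
  have hb0 : b < 0 := by simpa using hfb 0 h0
  refine ⟨(InnerProductSpace.toDual ℝ V).symm f, ?_, ?_⟩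
  · intro x hx
    rw [InnerProductSpace.toDual_symm_apply]
    by_contra! hneg
    -- scaled by `b / f x > 0`, the point `x` would have value exactly `b`
    have h := hfb _ (hK.smul_mem (div_pos_of_neg_of_neg hb0 hneg) hx)
    rw [map_smul, smul_eq_mul, div_mul_cancel₀ _ hneg.ne] at h
    exact lt_irrefl _ h
  · intro x hx
    rw [InnerProductSpace.toDual_symm_apply]
    linarith [hfa x hx]

lemma exists_dualCone_inner_pos [FiniteDimensional ℝ V] {K : Set V} (hK : IsRegularCone V K)
    {v : V} (hv : v ∈ K) (hv0 : v ≠ 0) : ∃ u ∈ dualCone K, 0 < ⟪u, v⟫ := by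
  have hnv : -v ∉ K := by
    intro h
    have h' : v ∈ K ∩ -K := ⟨hv, by simpa using h⟩
    rw [hK.pointed] at h'
    exact hv0 h'
  obtain ⟨u, hu, h⟩ := exists_dualCone_inner_neg hK (convex_singleton (-v)) isCompact_singleton
    (Set.disjoint_singleton_left.2 hnv)
  refine ⟨u, hu, ?_⟩
  have := h (-v) rfl
  rw [inner_neg_right] at this
  linarith

/-- Members of the dual cone are uniformly positive at interior points of the cone: test `u`
against the point `e - δ u / ‖u‖` of `K`. -/
lemma mul_norm_le_inner_of_ball_subset {K : Set V} {e : V} {δ : ℝ} (hδ : 0 ≤ δ)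
    (hball : Metric.closedBall e δ ⊆ K) {u : V} (hu : u ∈ dualCone K) :
    δ * ‖u‖ ≤ ⟪u, e⟫ := by
  rcases eq_or_ne u 0 with rfl | hu0
  · simp
  have hn : ‖u‖ ≠ 0 := norm_ne_zero_iff.2 hu0
  have hmem : e - (δ * ‖u‖⁻¹) • u ∈ K := by
    apply hball
    rw [mem_closedBall_iff_norm, sub_sub_cancel_left, norm_neg, norm_smul, Real.norm_eq_abs,
      abs_of_nonneg (by positivity), mul_assoc, inv_mul_cancel₀ hn, mul_one]
  have h := hu _ hmem
  rw [inner_sub_right, real_inner_smul_right, real_inner_self_eq_norm_sq] at h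
  have h2 : δ * ‖u‖⁻¹ * ‖u‖ ^ 2 = δ * ‖u‖ := by field_simp
  linarith

/-- Weak duality. When no `t` satisfies `x - t • v ∈ K`, the junk value `λ_v(x) = 0` obeys the
same bound. -/
lemma lambdaVec_le {K : Set V} {L : Submodule ℝ V} {u v x y : V} (hu : u ∈ dualCone K)
    (hy : y ∈ Lᗮ) (huv : 0 < ⟪u, v⟫) (hx : x ∈ L) (hx1 : ‖x‖ ≤ 1) :
    lambdaVec K v x ≤ ‖y - u‖ / ⟪u, v⟫ := by
  apply Real.sSup_le _ (by positivity)
  intro t ht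
  rw [le_div_iff₀ huv]
  have h := hu _ ht
  rw [inner_sub_right, real_inner_smul_right] at h
  have hyx : ⟪y, x⟫ = 0 := Submodule.inner_left_of_mem_orthogonal hx hy
  have h2 : ⟪u, x⟫ = ⟪u - y, x⟫ := by rw [inner_sub_left, hyx, sub_zero]
  have h3 := real_inner_le_norm (u - y) x
  rw [norm_sub_rev] at h3
  nlinarith [norm_nonneg (y - u)]

/-- Strong duality: a lower bound `t` for `‖y - u‖` over unit `u ∈ K*` and `y ∈ Lᗮ` is feasible
for the primal problem attached to any unit `v ∈ K`. -/
lemma exists_sub_smul_mem [FiniteDimensional ℝ V] {K : Set V} (hK : IsRegularCone V K)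
    (L : Submodule ℝ V) {v : V} (hv1 : ‖v‖ = 1) {t : ℝ} (ht0 : 0 ≤ t)
    (ht : ∀ u ∈ dualCone K, ‖u‖ = 1 → ∀ y ∈ Lᗮ, t ≤ ‖y - u‖) :
    ∃ x ∈ L, ‖x‖ ≤ 1 ∧ x - t • v ∈ K := by
  by_contra! hcon
  let B : Set V := (L : Set V) ∩ Metric.closedBall 0 1
  have hBc : IsCompact B :=
    (isCompact_closedBall (0 : V) 1).inter_left (Submodule.closed_of_finiteDimensional L)
  have hBconv : Convex ℝ B := L.convex.inter (convex_closedBall 0 1)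
  have hd : Disjoint ((fun x => -(t • v) + x) '' B) K := by
    rw [Set.disjoint_left]
    rintro _ ⟨x, hx, rfl⟩ hxK
    have := hcon x hx.1 (by simpa using hx.2)
    apply this
    rwa [sub_eq_neg_add]
  obtain ⟨u, hu, h⟩ := exists_dualCone_inner_neg hK (hBconv.translate _)
    (hBc.image (by fun_prop)) hd
  let p : V := L.starProjection u
  have hpL : p ∈ L := L.starProjection_apply_mem u
  have hup : u - p ∈ Lᗮ := L.sub_starProjection_mem_orthogonal u
  have hinner : ⟪u, p⟫ = ‖p‖ ^ 2 := by
    have h0 : ⟪u - p, p⟫ = 0 := Submodule.inner_left_of_mem_orthogonal hpL hup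
    rw [inner_sub_left, real_inner_self_eq_norm_sq] at h0
    linarith
  -- `‖p‖⁻¹ • p` maximizes `⟪u, ·⟫` over the unit ball of `L`; it is `0` when `p = 0`
  have hmem : ‖p‖⁻¹ • p ∈ B := by
    refine ⟨L.smul_mem _ hpL, ?_⟩
    rw [mem_closedBall_zero_iff, norm_smul, norm_inv, norm_norm]
    exact inv_mul_le_one
  have h1 := h _ ⟨_, hmem, rfl⟩
  rw [inner_add_right, inner_neg_right, real_inner_smul_right, real_inner_smul_right, hinner]
    at h1
  have h2 : ‖p‖⁻¹ * ‖p‖ ^ 2 = ‖p‖ := by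
    rcases eq_or_ne ‖p‖ 0 with h0 | h0
    · simp [h0]
    · field_simp
  rw [h2] at h1
  have h3 : ⟪u, v⟫ ≤ ‖u‖ := by simpa [hv1] using real_inner_le_norm u v
  have hlt : ‖p‖ < t * ‖u‖ := by nlinarith
  have hupos : 0 < ‖u‖ := by
    rcases (norm_nonneg u).eq_or_lt with h0 | h0
    · rw [← h0, mul_zero] at hlt
      exact absurd hlt (not_lt.2 (norm_nonneg p))
    · exact h0
  have hu' : ‖u‖⁻¹ • u ∈ dualCone K := by
    intro x hx
    rw [real_inner_smul_left]
    exact mul_nonneg (by positivity) (hu x hx)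
  have h4 := ht _ hu' (by rw [norm_smul, norm_inv, norm_norm, inv_mul_cancel₀ hupos.ne'])
    _ (Lᗮ.smul_mem ‖u‖⁻¹ hup)
  rw [← smul_sub, sub_sub_cancel_left, norm_smul, norm_neg, norm_inv, norm_norm,
    ← div_eq_inv_mul, le_div_iff₀ hupos] at h4
  linarith

/-- Uniform positivity of the dual cone at `e` keeps `Θ(K*, K)` away from `π / 2`. -/
lemma cos_thetaKK_pos {K : Set V} {e : V} {δ : ℝ} (hδ : 0 < δ) (he : e ≠ 0) (heK : e ∈ K)
    (hball : Metric.closedBall e δ ⊆ K) : 0 < Real.cos (thetaKK K) := by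
  have hepos : 0 < ‖e‖ := norm_pos_iff.2 he
  have hle : thetaKK K ≤ Real.arccos (δ / ‖e‖) := by
    apply Real.sSup_le _ (Real.arccos_nonneg _)
    rintro _ ⟨u, hu, hu0, rfl⟩
    refine le_trans (csInf_le ⟨0, ?_⟩ ⟨e, heK, he, rfl⟩) ?_
    · rintro _ ⟨v, -, -, rfl⟩
      exact InnerProductGeometry.angle_nonneg _ _
    · apply Real.arccos_le_arccos
      have hupos : 0 < ‖u‖ := norm_pos_iff.2 hu0
      rw [div_le_div_iff₀ hepos (by positivity)]
      nlinarith [mul_norm_le_inner_of_ball_subset hδ.le hball hu]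
  have hnonneg : 0 ≤ thetaKK K := by
    apply Real.sSup_nonneg
    rintro _ ⟨u, -, -, rfl⟩
    apply Real.sInf_nonneg
    rintro _ ⟨v, -, -, rfl⟩
    exact InnerProductGeometry.angle_nonneg _ _
  have hlt : Real.arccos (δ / ‖e‖) < Real.pi / 2 := Real.arccos_lt_pi_div_two.2 (by positivity)
  exact Real.cos_pos_of_mem_Ioo ⟨by linarith [Real.pi_pos], by linarith⟩

/-- If `c * cos ∠(u, v) ≤ r` for every nonzero `v ∈ K`, then the same holds for the smallest
such angle (the condition on the angle is closed), hence for the larger angle `Θ(K*, K)`. -/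
lemma mul_cos_thetaKK_le {K : Set V} (hne : ∃ v ∈ K, v ≠ 0) {u : V} (hu : u ∈ dualCone K)
    (hu0 : u ≠ 0) {c r : ℝ} (hc : 0 ≤ c)
    (h : ∀ v ∈ K, v ≠ 0 → c * Real.cos (InnerProductGeometry.angle u v) ≤ r) :
    c * Real.cos (thetaKK K) ≤ r := by
  have hbelow : ∀ w : V,
      BddBelow {φ : ℝ | ∃ v ∈ K, v ≠ 0 ∧ φ = InnerProductGeometry.angle w v} := by
    refine fun w => ⟨0, ?_⟩
    rintro _ ⟨v, -, -, rfl⟩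
    exact InnerProductGeometry.angle_nonneg _ _
  obtain ⟨v₀, hv₀, hv₀0⟩ := hne
  have hpi : ∀ w : V,
      sInf {φ : ℝ | ∃ v ∈ K, v ≠ 0 ∧ φ = InnerProductGeometry.angle w v} ≤ Real.pi := fun w =>
    (csInf_le (hbelow w) ⟨v₀, hv₀, hv₀0, rfl⟩).trans (InnerProductGeometry.angle_le_pi _ _)
  set θ := sInf {φ : ℝ | ∃ v ∈ K, v ≠ 0 ∧ φ = InnerProductGeometry.angle u v} with hθ
  have hθr : c * Real.cos θ ≤ r := by
    have hcl : IsClosed {φ : ℝ | c * Real.cos φ ≤ r} :=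
      isClosed_le (by fun_prop) continuous_const
    refine closure_minimal ?_ hcl (csInf_mem_closure ⟨_, v₀, hv₀, hv₀0, rfl⟩ (hbelow u))
    rintro _ ⟨v, hv, hv0, rfl⟩
    exact h v hv hv0
  have hθ0 : 0 ≤ θ := by
    apply Real.sInf_nonneg
    rintro _ ⟨v, -, -, rfl⟩
    exact InnerProductGeometry.angle_nonneg _ _
  have hle : θ ≤ thetaKK K := by
    refine le_csSup ⟨Real.pi, ?_⟩ ⟨u, hu, hu0, rfl⟩
    rintro _ ⟨w, -, -, rfl⟩
    exact hpi w
  have hlepi : thetaKK K ≤ Real.pi := by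
    apply Real.sSup_le _ Real.pi_pos.le
    rintro _ ⟨w, -, -, rfl⟩
    exact hpi w
  exact (mul_le_mul_of_nonneg_left (Real.cos_le_cos_of_nonneg_of_le_pi hθ0 hlepi hle) hc).trans
    hθr

lemma thetaKK_eq_zero {K : Set V} (hKK : K = dualCone K) : thetaKK K = 0 := by
  have hangle : ∀ u ∈ dualCone K, u ≠ 0 →
      sInf {φ : ℝ | ∃ v ∈ K, v ≠ 0 ∧ φ = InnerProductGeometry.angle u v} = 0 := by
    intro u hu hu0
    apply IsLeast.csInf_eq
    refine ⟨⟨u, hKK ▸ hu, hu0, (InnerProductGeometry.angle_self hu0).symm⟩, ?_⟩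
    rintro _ ⟨v, -, -, rfl⟩
    exact InnerProductGeometry.angle_nonneg _ _
  apply le_antisymm
  · apply Real.sSup_le _ le_rfl
    rintro _ ⟨u, hu, hu0, rfl⟩
    exact (hangle u hu hu0).le
  · apply Real.sSup_nonneg
    rintro _ ⟨u, hu, hu0, rfl⟩
    exact (hangle u hu hu0).ge

/-- With both norms Euclidean, `1 ≤ σ(L)/ν(L) ≤ 1/cos Θ(K*,K)`; if moreover `K = K*`
then `ν(L) = σ(L)`. -/
theorem stmt_13 {V : Type*} [NormedAddCommGroup V] [InnerProductSpace ℝ V]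
    [FiniteDimensional ℝ V]
    (K : Set V) (hK : IsRegularCone V K)
    (m : ℕ) (hm : m < finrank ℝ V)
    (L : Submodule ℝ V) (hL : finrank ℝ L = m)
    (hint : ((L : Set V) ∩ interior K).Nonempty) :
    (1 ≤ sigmaMeas (fun x : V => ‖x‖) (fun x : V => ‖x‖) K L /
        sInf {r : ℝ | ∃ u ∈ dualCone K, ∃ y ∈ Lᗮ, ‖u‖ = 1 ∧ r = ‖y - u‖} ∧
      sigmaMeas (fun x : V => ‖x‖) (fun x : V => ‖x‖) K L /
        sInf {r : ℝ | ∃ u ∈ dualCone K, ∃ y ∈ Lᗮ, ‖u‖ = 1 ∧ r = ‖y - u‖} ≤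
        1 / Real.cos (thetaKK K)) ∧
    (K = dualCone K →
      sInf {r : ℝ | ∃ u ∈ dualCone K, ∃ y ∈ Lᗮ, ‖u‖ = 1 ∧ r = ‖y - u‖} =
        sigmaMeas (fun x : V => ‖x‖) (fun x : V => ‖x‖) K L) := by
  obtain ⟨e, heL, heint⟩ := hint
  obtain ⟨δ, hδ, hball⟩ := Metric.nhds_basis_closedBall.mem_iff.1 (mem_interior_iff_mem_nhds.1 heint)
  have heK : e ∈ K := interior_subset heint
  have he : e ≠ 0 := by
    -- a ball around `0` inside `K` would contain `±w` for some `w ≠ 0`, against pointedness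
    rintro rfl
    have : Nontrivial V := Module.finrank_pos_iff.1 (Nat.zero_lt_of_lt hm)
    obtain ⟨w, hw⟩ := exists_norm_eq V hδ.le
    have hw' : w ∈ K ∩ -K := by
      refine ⟨hball ?_, hball ?_⟩
      · simp [hw]
      · simp [hw]
    rw [hK.pointed] at hw'
    rw [Set.mem_singleton_iff.1 hw', norm_zero] at hw
    exact hδ.ne hw
  have hepos : 0 < ‖e‖ := norm_pos_iff.2 he
  set ν := sInf {r : ℝ | ∃ u ∈ dualCone K, ∃ y ∈ Lᗮ, ‖u‖ = 1 ∧ r = ‖y - u‖} with hν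
  set σ := sigmaMeas (fun x : V => ‖x‖) (fun x : V => ‖x‖) K L with hσ
  obtain ⟨u₀, hu₀, hu₀1⟩ : ∃ u ∈ dualCone K, ‖u‖ = 1 := by
    obtain ⟨u, hu, hue⟩ := exists_dualCone_inner_pos hK heK he
    have hu0 : u ≠ 0 := by rintro rfl; simp at hue
    refine ⟨‖u‖⁻¹ • u, fun x hx => ?_, norm_smul_inv_norm hu0⟩
    rw [real_inner_smul_left]
    exact mul_nonneg (by positivity) (hu x hx)
  have hνpos : 0 < ν := by
    refine lt_of_lt_of_le (div_pos hδ hepos) (le_csInf ⟨_, u₀, hu₀, 0, Lᗮ.zero_mem, hu₀1, rfl⟩ ?_)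
    rintro _ ⟨u, hu, y, hy, hu1, rfl⟩
    rw [div_le_iff₀ hepos]
    have h := mul_norm_le_inner_of_ball_subset hδ.le hball hu
    have hye : ⟪y, e⟫ = 0 := Submodule.inner_left_of_mem_orthogonal heL hy
    have h2 := real_inner_le_norm (u - y) e
    rw [inner_sub_left, hye, norm_sub_rev] at h2
    rw [hu1] at h
    linarith
  have hνle : ∀ u ∈ dualCone K, ‖u‖ = 1 → ∀ y ∈ Lᗮ, ν ≤ ‖y - u‖ := by
    intro u hu hu1 y hy
    refine csInf_le ⟨0, ?_⟩ ⟨u, hu, y, hy, hu1, rfl⟩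
    rintro _ ⟨u, -, y, -, -, rfl⟩
    exact norm_nonneg _
  have hνv : ∀ v ∈ K, ‖v‖ = 1 →
      ν ≤ sSup {c : ℝ | ∃ x ∈ L, ‖x‖ ≤ 1 ∧ c = lambdaVec K v x} := by
    intro v hv hv1
    obtain ⟨x, hxL, hx1, hx⟩ := exists_sub_smul_mem hK L hv1 hνpos.le hνle
    obtain ⟨u, hu, huv⟩ := exists_dualCone_inner_pos hK hv (norm_ne_zero_iff.1 (by simp [hv1]))
    have h1 : ν ≤ lambdaVec K v x := by
      refine le_csSup ⟨⟪u, x⟫ / ⟪u, v⟫, ?_⟩ hx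
      intro t ht
      have h := hu _ ht
      rw [inner_sub_right, real_inner_smul_right] at h
      rw [le_div_iff₀ huv]
      linarith
    refine h1.trans (le_csSup ⟨‖0 - u‖ / ⟪u, v⟫, ?_⟩ ⟨x, hxL, hx1, rfl⟩)
    rintro _ ⟨z, hz, hz1, rfl⟩
    exact lambdaVec_le hu Lᗮ.zero_mem huv hz hz1
  have hνσ : ν ≤ σ := by
    refine le_csInf ⟨_, ‖e‖⁻¹ • e, hK.smul_mem (inv_pos.2 hepos) heK, norm_smul_inv_norm he, rfl⟩ ?_
    rintro _ ⟨v, hv, hv1, rfl⟩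
    exact hνv v hv hv1
  have hσpos : 0 < σ := hνpos.trans_le hνσ
  have hσle : ∀ v ∈ K, ‖v‖ = 1 →
      σ ≤ sSup {c : ℝ | ∃ x ∈ L, ‖x‖ ≤ 1 ∧ c = lambdaVec K v x} := by
    intro v hv hv1
    refine csInf_le ⟨ν, ?_⟩ ⟨v, hv, hv1, rfl⟩
    rintro _ ⟨w, hw, hw1, rfl⟩
    exact hνv w hw hw1
  have hcos : 0 < Real.cos (thetaKK K) := cos_thetaKK_pos hδ he heK hball
  have hmain : σ * Real.cos (thetaKK K) ≤ ν := by
    refine le_csInf ⟨_, u₀, hu₀, 0, Lᗮ.zero_mem, hu₀1, rfl⟩ ?_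
    rintro _ ⟨u, hu, y, hy, hu1, rfl⟩
    refine mul_cos_thetaKK_le ⟨e, heK, he⟩ hu (norm_ne_zero_iff.1 (by simp [hu1])) hσpos.le ?_
    intro v hv hv0
    have hvpos : 0 < ‖v‖ := norm_pos_iff.2 hv0
    set w := ‖v‖⁻¹ • v with hw
    have hwK : w ∈ K := hK.smul_mem (inv_pos.2 hvpos) hv
    have hw1 : ‖w‖ = 1 := norm_smul_inv_norm hv0
    have hcosw : Real.cos (InnerProductGeometry.angle u v) = ⟪u, w⟫ := by
      rw [InnerProductGeometry.cos_angle, hw, real_inner_smul_right, hu1, one_mul, div_eq_inv_mul]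
    rw [hcosw]
    rcases (hu w hwK).eq_or_lt with h0 | hpos
    · rw [← h0, mul_zero]
      exact norm_nonneg _
    · rw [← le_div_iff₀ hpos]
      refine (hσle w hwK hw1).trans (Real.sSup_le ?_ (by positivity))
      rintro _ ⟨x, hx, hx1, rfl⟩
      exact lambdaVec_le hu hy hpos hx hx1
  refine ⟨⟨(one_le_div hνpos).2 hνσ, ?_⟩, fun hKK => le_antisymm hνσ ?_⟩
  · rw [div_le_div_iff₀ hνpos hcos, one_mul]
    exact hmain
  · simpa [thetaKK_eq_zero hKK] using hmain
end
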